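/- arXiv:1611.03807 — 2 statements merged into one kernel-verified Lean document; each statement's English description precedes it below -/
import Mathlib

section
/- Let I be a nonempty subset of T and let s̃ = (s̃_{ij}) ∈ ℝ^D satisfy s̃_{ij} ≥ 0 for all 2 ≤ i < j ≤ N−2 with i,j ∈ I. If there exists i₀ ∈ I such that 1 + s̃_{1i₀} + s̃_{(N−1)i₀} + Σ_{2≤j≤N−2, j≠i₀} s̃_{i₀j} ≥ 0, then the integral Z₁(s̃;I) diverges to +∞. -/
open MeasureTheory Finset

noncomputable section

instance padicMS (p : ℕ) [Fact p.Prime] : MeasurableSpace ℚ_[p] := borel _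
instance padicBS (p : ℕ) [Fact p.Prime] : BorelSpace ℚ_[p] := ⟨rfl⟩

/-- The closed unit ball of `ℚ_[p]` (i.e. `ℤ_[p]`) as a positive compact subset. -/
def padicBall (p : ℕ) [Fact p.Prime] : TopologicalSpace.PositiveCompacts ℚ_[p] where
  carrier := Metric.closedBall 0 1
  isCompact' := isCompact_closedBall 0 1
  interior_nonempty' := ⟨0, Metric.ball_subset_interior_closedBall (Metric.mem_ball_self one_pos)⟩

/-- The Haar measure on `(ℚ_[p], +)`, normalized so that `ℤ_[p]` has measure `1`. -/
def padicHaar (p : ℕ) [Fact p.Prime] : Measure ℚ_[p] :=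
  Measure.addHaarMeasure (padicBall p)

instance padicHaarSF (p : ℕ) [Fact p.Prime] : SigmaFinite (padicHaar p) := by
  unfold padicHaar; infer_instance

/-- The product of normalized Haar measures on a finite power of `ℚ_[p]`. -/
def padicPi (p : ℕ) [Fact p.Prime] (ι : Type) [Fintype ι] : Measure (ι → ℚ_[p]) :=
  Measure.pi fun _ => padicHaar p

/-- `T = {2, …, N-2}`. -/
def Tset (N : ℕ) : Finset ℕ := Finset.Icc 2 (N - 2)

/-- The ordered pairs `(i, j)` with `i < j` and `i, j ∈ A`. -/
def pairsIn (A : Finset ℕ) : Finset (ℕ × ℕ) := (A ×ˢ A).filter fun q => q.1 < q.2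

/-- The coordinates of a point of `ℚ_p^A`, as a function on `ℕ` (junk value `0` off `A`). -/
def padicCoord {p : ℕ} [Fact p.Prime] {A : Finset ℕ} (x : A → ℚ_[p]) (n : ℕ) : ℚ_[p] :=
  if h : n ∈ A then x ⟨n, h⟩ else 0

/-- The domain of integration of `Z₁(s; I)` inside `ℤ_p^{|I|}` (off the zero locus). -/
def Z1set (p : ℕ) [Fact p.Prime] (I : Finset ℕ) : Set (↥I → ℚ_[p]) :=
  {x | (∀ i, ‖x i‖ ≤ 1 ∧ x i ≠ 0) ∧
    ∀ q ∈ pairsIn I, padicCoord x q.1 ≠ padicCoord x q.2}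

/-- Every closed ball of radius `p⁻ᵏ` in `ℚ_[p]` has Haar measure at least `p⁻ᵏ`. -/
theorem le_padicHaar_closedBall (p : ℕ) [Fact p.Prime] (k : ℕ) (c : ℚ_[p]) :
    ENNReal.ofReal ((p : ℝ)⁻¹ ^ k) ≤ padicHaar p (Metric.closedBall c ((p : ℝ)⁻¹ ^ k)) := by
  have hp : 0 < (p : ℝ) := by exact_mod_cast (Fact.out : p.Prime).pos
  have : (padicHaar p).IsAddHaarMeasure := by unfold padicHaar; infer_instance
  have hcover : Metric.closedBall (0 : ℚ_[p]) 1 ⊆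
      ⋃ n ∈ Finset.range (p ^ k), Metric.closedBall (n : ℚ_[p]) ((p : ℝ)⁻¹ ^ k) := by
    intro x hx
    rw [mem_closedBall_zero_iff] at hx
    let z : ℤ_[p] := ⟨x, hx⟩
    have hz := (PadicInt.norm_le_pow_iff_mem_span_pow (z - (z.appr k : ℤ_[p])) k).2 (PadicInt.appr_spec k z)
    simp only [Set.mem_iUnion, Finset.mem_range, Metric.mem_closedBall, dist_eq_norm]
    refine ⟨z.appr k, z.appr_lt k, ?_⟩
    rw [PadicInt.norm_def, PadicInt.coe_sub, PadicInt.coe_natCast, zpow_neg, zpow_natCast,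
      ← inv_pow] at hz
    exact hz
  have hone : padicHaar p (Metric.closedBall (0 : ℚ_[p]) 1) = 1 :=
    Measure.addHaarMeasure_self (K₀ := padicBall p)
  have hle : (1 : ENNReal) ≤
      (p ^ k : ℕ) * padicHaar p (Metric.closedBall c ((p : ℝ)⁻¹ ^ k)) := by
    calc (1 : ENNReal) = padicHaar p (Metric.closedBall (0 : ℚ_[p]) 1) := hone.symm
      _ ≤ _ := measure_mono hcover
      _ ≤ ∑ n ∈ Finset.range (p ^ k),
            padicHaar p (Metric.closedBall (n : ℚ_[p]) ((p : ℝ)⁻¹ ^ k)) :=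
          measure_biUnion_finset_le _ _
      _ = ∑ n ∈ Finset.range (p ^ k), padicHaar p (Metric.closedBall c ((p : ℝ)⁻¹ ^ k)) := by
          refine Finset.sum_congr rfl fun n _ => ?_
          rw [Measure.addHaar_closedBall_center, Measure.addHaar_closedBall_center _ c]
      _ = _ := by simp
  have heq : ENNReal.ofReal ((p : ℝ)⁻¹ ^ k) = ((p ^ k : ℕ) : ENNReal)⁻¹ := by
    rw [inv_pow, ENNReal.ofReal_inv_of_pos (by positivity), ← Nat.cast_pow,
      ENNReal.ofReal_natCast]
  rw [heq, ENNReal.inv_le_iff_le_mul]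
  · exact hle
  · simp [(Fact.out : p.Prime).ne_zero]
  · simp

/-- The sphere of radius `p⁻ᵏ` in `ℚ_[p]` has Haar measure at least `p⁻⁽ᵏ⁺¹⁾`. -/
theorem le_padicHaar_sphere (p : ℕ) [Fact p.Prime] (k : ℕ) :
    ENNReal.ofReal ((p : ℝ)⁻¹ ^ (k + 1)) ≤
      padicHaar p (Metric.sphere (0 : ℚ_[p]) ((p : ℝ)⁻¹ ^ k)) := by
  have hp : 1 < (p : ℝ) := by exact_mod_cast (Fact.out : p.Prime).one_lt
  refine (le_padicHaar_closedBall p (k + 1) ((p : ℚ_[p]) ^ k)).trans (measure_mono fun x hx => ?_)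
  rw [Metric.mem_closedBall, dist_eq_norm] at hx
  have hc : ‖(p : ℚ_[p]) ^ k‖ = (p : ℝ)⁻¹ ^ k := by rw [norm_pow, Padic.norm_p]
  have hlt : ‖x - (p : ℚ_[p]) ^ k‖ < ‖(p : ℚ_[p]) ^ k‖ := by
    rw [hc]
    exact hx.trans_lt (pow_lt_pow_right_of_lt_one₀ (by positivity) (inv_lt_one_of_one_lt₀ hp)
      k.lt_succ_self)
  have h := Padic.add_eq_max_of_ne hlt.ne
  rw [sub_add_cancel, max_eq_right hlt.le, hc] at h
  simpa using h

/-- The distance between two `p`-adic numbers of distinct norms is the larger of the norms. -/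
theorem padic_norm_sub_of_norm_eq {p : ℕ} [Fact p.Prime] {x y : ℚ_[p]} {m n : ℕ} (hmn : m < n)
    (hx : ‖x‖ = (p : ℝ)⁻¹ ^ m) (hy : ‖y‖ = (p : ℝ)⁻¹ ^ n) : ‖x - y‖ = (p : ℝ)⁻¹ ^ m := by
  have hp : 1 < (p : ℝ) := by exact_mod_cast (Fact.out : p.Prime).one_lt
  have hlt : ‖-y‖ < ‖x‖ := by
    rw [norm_neg, hx, hy]
    exact pow_lt_pow_right_of_lt_one₀ (by positivity) (inv_lt_one_of_one_lt₀ hp) hmn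
  rw [sub_eq_add_neg, Padic.add_eq_max_of_ne hlt.ne', max_eq_left hlt.le, hx]

/-- If `s̃_{ij} ≥ 0` for `i, j ∈ I` and
`1 + s̃_{1i₀} + s̃_{(N-1)i₀} + Σ_{j ≠ i₀} s̃_{i₀j} ≥ 0` for some `i₀ ∈ I`, then
`Z₁(s̃; I)` diverges to `+∞`. -/
theorem Z1_diverges (p : ℕ) [Fact p.Prime] (N : ℕ) (hN : 4 ≤ N)
    (I : Finset ℕ) (hIT : I ⊆ Tset N) (hI : I.Nonempty)
    (s : ℕ → ℕ → ℝ) (hsym : ∀ i j, s i j = s j i)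
    (hpos : ∀ q ∈ pairsIn I, 0 ≤ s q.1 q.2)
    (i₀ : ℕ) (hi₀ : i₀ ∈ I)
    (hdiv : 0 ≤ 1 + s 1 i₀ + s (N - 1) i₀ + ∑ j ∈ (Tset N).erase i₀, s i₀ j) :
    ∫⁻ x in Z1set p I,
      ENNReal.ofReal
        ((∏ q ∈ pairsIn I, ‖padicCoord x q.1 - padicCoord x q.2‖ ^ s q.1 q.2) *
          ∏ i ∈ I, ‖padicCoord x i‖ ^
            (-(2 + s 1 i + s (N - 1) i + ∑ j ∈ (Tset N).erase i, s i j)))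
      ∂(padicPi p ↥I) = ⊤ := by
  classical
  have hp : 1 < (p : ℝ) := by exact_mod_cast (Fact.out : p.Prime).one_lt
  set r : ℝ := (p : ℝ)⁻¹ with hr
  have hr0 : 0 < r := by positivity
  have hr1 : r < 1 := inv_lt_one_of_one_lt₀ hp
  set e : ℕ → ℝ := fun i => -(2 + s 1 i + s (N - 1) i + ∑ j ∈ (Tset N).erase i, s i j) with he
  have he₀ : e i₀ + 1 ≤ 0 := by simp only [he]; linarith
  -- the coordinate `i₀` has norm `r ^ (N + k)`, each other coordinate `i` has norm `r ^ i`
  let m : ℕ → ℕ → ℕ := fun k => Function.update id i₀ (N + k)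
  have hm₀ (k : ℕ) : m k i₀ = N + k := Function.update_self ..
  have hm (k : ℕ) {i : ℕ} (h : i ≠ i₀) : m k i = i := Function.update_of_ne h ..
  have hlt {i : ℕ} (hi : i ∈ I) : i < N := by
    have := Finset.mem_Icc.1 (hIT hi); omega
  let B : ℕ → Set (I → ℚ_[p]) := fun k =>
    Set.univ.pi fun i => Metric.sphere (0 : ℚ_[p]) (r ^ m k i)
  have hBnorm {k : ℕ} {x : I → ℚ_[p]} (hx : x ∈ B k) (i : I) : ‖x i‖ = r ^ m k i := by
    simpa using hx i (Set.mem_univ i)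
  have hcoord {k : ℕ} {x : I → ℚ_[p]} (hx : x ∈ B k) {i : ℕ} (hi : i ∈ I) :
      ‖padicCoord x i‖ = r ^ m k i := by
    rw [padicCoord, dif_pos hi]; exact hBnorm hx ⟨i, hi⟩
  have hBmeas (k : ℕ) : MeasurableSet (B k) :=
    MeasurableSet.univ_pi fun _ => Metric.isClosed_sphere.measurableSet
  have hBdisj : Pairwise (Function.onFun Disjoint B) := by
    intro k l hkl
    refine Set.disjoint_left.2 fun x hk hl => hkl ?_
    have h := (hBnorm hk ⟨i₀, hi₀⟩).symm.trans (hBnorm hl ⟨i₀, hi₀⟩)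
    have := pow_right_injective₀ hr0 hr1.ne h
    simp only [hm₀] at this
    omega
  let d : ℕ × ℕ → ℕ := fun q => if q.1 = i₀ then q.2 else q.1
  have hdist {k : ℕ} {x : I → ℚ_[p]} (hx : x ∈ B k) {q : ℕ × ℕ} (hq : q ∈ pairsIn I) :
      ‖padicCoord x q.1 - padicCoord x q.2‖ = r ^ d q := by
    obtain ⟨i, j⟩ := q
    simp only [pairsIn, Finset.mem_filter, Finset.mem_product] at hq
    obtain ⟨⟨hi, hj⟩, hij⟩ := hq
    have hx1 := hcoord hx hi
    have hx2 := hcoord hx hj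
    have hiN := hlt hi
    have hjN := hlt hj
    simp only [d]
    split_ifs with h
    · rw [norm_sub_rev]
      rw [h, hm₀] at hx1
      rw [hm k (by omega)] at hx2
      rw [h]
      exact padic_norm_sub_of_norm_eq (by omega) hx2 hx1
    · rw [hm k h] at hx1
      refine padic_norm_sub_of_norm_eq ?_ hx1 hx2
      by_cases h2 : j = i₀
      · rw [h2, hm₀]; omega
      · rwa [hm k h2]
  have hBsub : (⋃ k, B k) ⊆ Z1set p I := by
    refine Set.iUnion_subset fun k x hx => ⟨fun i => ?_, fun q hq h => ?_⟩
    · have h := hBnorm hx i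
      refine ⟨h ▸ pow_le_one₀ hr0.le hr1.le, fun h0 => ?_⟩
      rw [h0, norm_zero] at h
      exact (pow_pos hr0 _).ne h
    · have h' := hdist hx hq
      rw [h, sub_self, norm_zero] at h'
      exact (pow_pos hr0 _).ne h'
  have hvol (k : ℕ) : ENNReal.ofReal (∏ i ∈ I, r ^ (m k i + 1)) ≤ padicPi p I (B k) := by
    rw [padicPi, Measure.pi_pi, ← Finset.prod_coe_sort,
      ENNReal.ofReal_prod_of_nonneg fun _ _ => by positivity]
    exact Finset.prod_le_prod' fun i _ => le_padicHaar_sphere p _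
  let C : ℝ := (∏ q ∈ pairsIn I, (r ^ d q) ^ s q.1 q.2) *
    (r * ∏ i ∈ I.erase i₀, ((r ^ i) ^ e i * r ^ (i + 1)))
  have hC : 0 < C := by positivity
  have hbound (k : ℕ) : C ≤ ((∏ q ∈ pairsIn I, (r ^ d q) ^ s q.1 q.2) *
      ∏ i ∈ I, (r ^ m k i) ^ e i) * ∏ i ∈ I, r ^ (m k i + 1) := by
    rw [mul_assoc, ← Finset.prod_mul_distrib, ← Finset.mul_prod_erase I _ hi₀, hm₀,
      Finset.prod_congr (s₁ := I.erase i₀) rfl fun i hi => by rw [hm k (Finset.ne_of_mem_erase hi)]]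
    have hone : 1 ≤ (r ^ (N + k)) ^ e i₀ * r ^ (N + k) := by
      rw [← Real.rpow_add_one (by positivity)]
      exact Real.one_le_rpow_of_pos_of_le_one_of_nonpos (by positivity)
        (pow_le_one₀ hr0.le hr1.le) he₀
    simp only [C]
    gcongr
    rw [pow_succ, ← mul_assoc]
    exact le_mul_of_one_le_left hr0.le hone
  refine top_unique ?_
  calc (⊤ : ENNReal) = ∑' _ : ℕ, ENNReal.ofReal C :=
        (ENNReal.tsum_const_eq_top_of_ne_zero (ENNReal.ofReal_pos.2 hC).ne').symm
    _ ≤ ∑' k, ∫⁻ x in B k, ENNReal.ofReal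
          ((∏ q ∈ pairsIn I, ‖padicCoord x q.1 - padicCoord x q.2‖ ^ s q.1 q.2) *
            ∏ i ∈ I, ‖padicCoord x i‖ ^ e i) ∂(padicPi p I) := by
        refine ENNReal.tsum_le_tsum fun k => ?_
        have hconst : ∀ x ∈ B k, ENNReal.ofReal
            ((∏ q ∈ pairsIn I, ‖padicCoord x q.1 - padicCoord x q.2‖ ^ s q.1 q.2) *
              ∏ i ∈ I, ‖padicCoord x i‖ ^ e i) = ENNReal.ofReal
            ((∏ q ∈ pairsIn I, (r ^ d q) ^ s q.1 q.2) * ∏ i ∈ I, (r ^ m k i) ^ e i) := by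
          intro x hx
          rw [Finset.prod_congr rfl fun q hq => by rw [hdist hx hq],
            Finset.prod_congr (s₁ := I) rfl fun i hi => by rw [hcoord hx hi]]
        rw [setLIntegral_congr_fun (hBmeas k) hconst, setLIntegral_const]
        refine (ENNReal.ofReal_le_ofReal (hbound k)).trans ?_
        rw [ENNReal.ofReal_mul (by positivity)]
        gcongr
        exact hvol k
    _ = ∫⁻ x in ⋃ k, B k, ENNReal.ofReal
          ((∏ q ∈ pairsIn I, ‖padicCoord x q.1 - padicCoord x q.2‖ ^ s q.1 q.2) *
            ∏ i ∈ I, ‖padicCoord x i‖ ^ e i) ∂(padicPi p I) :=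
        (lintegral_iUnion hBmeas hBdisj _).symm
    _ ≤ _ := lintegral_mono_set hBsub
end
end

section
/- If s = (s_{ij}) ∈ ℝ^D satisfies s_{ij} ≥ 0 for all pairs {i,j} with i,j ∈ {1,…,N−1}, then for every nonempty subset I of T the integral Z₁(s;I) diverges to +∞. -/
open MeasureTheory Finset

noncomputable section

instance padicHaar_isAddHaarMeasure (p : ℕ) [Fact p.Prime] :
    (padicHaar p).IsAddHaarMeasure := by
  unfold padicHaar; infer_instance

instance padicPi_isAddHaarMeasure (p : ℕ) [Fact p.Prime] (ι : Type) [Fintype ι] :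
    (padicPi p ι).IsAddHaarMeasure := by
  unfold padicPi; infer_instance

lemma padicHaar_closedBall_one (p : ℕ) [Fact p.Prime] (a : ℚ_[p]) :
    padicHaar p (Metric.closedBall a 1) = 1 := by
  have h : padicHaar p (Metric.closedBall 0 1) = 1 :=
    Measure.addHaarMeasure_self (K₀ := padicBall p)
  rw [← h, ← measure_preimage_add (padicHaar p) a (Metric.closedBall a 1)]
  congr 1
  ext x
  simp [dist_eq_norm]

lemma closedBall_prime_subset (p : ℕ) [Fact p.Prime] :
    Metric.closedBall (0 : ℚ_[p]) p ⊆
      ⋃ n ∈ Finset.range p, Metric.closedBall ((n : ℚ_[p]) / p) 1 := by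
  have hp0 : (p : ℚ_[p]) ≠ 0 := by exact_mod_cast (Fact.out : p.Prime).ne_zero
  have hpR : (0 : ℝ) < p := by exact_mod_cast (Fact.out : p.Prime).pos
  intro y hy
  rw [mem_closedBall_zero_iff] at hy
  have hx : ‖(p : ℚ_[p]) * y‖ ≤ 1 := by
    rw [norm_mul, Padic.norm_p]
    calc (p : ℝ)⁻¹ * ‖y‖ ≤ (p : ℝ)⁻¹ * p := by gcongr
      _ = 1 := inv_mul_cancel₀ hpR.ne'
  obtain ⟨n, hn, hmem⟩ := PadicInt.exists_mem_range (p := p) ⟨(p : ℚ_[p]) * y, hx⟩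
  have hlt := PadicInt.mem_nonunits.1 ((IsLocalRing.mem_maximalIdeal _).1 hmem)
  have hlt' : ‖(p : ℚ_[p]) * y - n‖ < (p : ℝ) ^ ((-1 : ℤ) + 1) := by
    rw [PadicInt.norm_def] at hlt
    rw [neg_add_cancel, zpow_zero]
    exact_mod_cast hlt
  rw [← Padic.norm_le_pow_iff_norm_lt_pow_add_one] at hlt'
  simp only [Set.mem_iUnion, Metric.mem_closedBall, dist_eq_norm, Finset.mem_range]
  refine ⟨n, hn, ?_⟩
  have hy' : y - n / p = (p : ℚ_[p])⁻¹ * (p * y - n) := by field_simp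
  rw [hy', norm_mul, norm_inv, Padic.norm_p, inv_inv]
  calc (p : ℝ) * ‖(p : ℚ_[p]) * y - n‖ ≤ p * (p : ℝ) ^ (-1 : ℤ) := by gcongr
    _ = 1 := by rw [zpow_neg_one, mul_inv_cancel₀ hpR.ne']

lemma padicHaar_closedBall_prime_le (p : ℕ) [Fact p.Prime] :
    padicHaar p (Metric.closedBall 0 p) ≤ p := by
  refine (measure_mono (closedBall_prime_subset p)).trans
    ((measure_biUnion_finset_le _ _).trans ?_)
  simp [padicHaar_closedBall_one]

/-- Multiplication by `p` as a homeomorphic automorphism of `ℚ_p^ι`. -/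
def mulPrimeHomeomorph (p : ℕ) [Fact p.Prime] (ι : Type) : (ι → ℚ_[p]) ≃ₜ (ι → ℚ_[p]) :=
  Homeomorph.smulOfNeZero (p : ℚ_[p]) (by exact_mod_cast (Fact.out : p.Prime).ne_zero)

lemma mulPrimeHomeomorph_apply (p : ℕ) [Fact p.Prime] (ι : Type) (x : ι → ℚ_[p]) (i : ι) :
    mulPrimeHomeomorph p ι x i = p * x i := rfl

lemma exists_map_mulPrime_eq_smul (p : ℕ) [Fact p.Prime] (ι : Type) [Fintype ι] :
    ∃ c : NNReal, c ≤ (p : NNReal) ^ Fintype.card ι ∧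
      (padicPi p ι).map (mulPrimeHomeomorph p ι) = c • padicPi p ι := by
  have hp0 : (p : ℚ_[p]) ≠ 0 := by exact_mod_cast (Fact.out : p.Prime).ne_zero
  have hpR : (0 : ℝ) < p := by exact_mod_cast (Fact.out : p.Prime).pos
  set φ := mulPrimeHomeomorph p ι with hφ
  have hH : ((padicPi p ι).map φ).IsAddHaarMeasure :=
    AddEquiv.isAddHaarMeasure_map (padicPi p ι)
      (DistribMulAction.toAddEquiv₀ (ι → ℚ_[p]) (p : ℚ_[p]) hp0)
      φ.continuous φ.symm.continuous
  refine ⟨Measure.addHaarScalarFactor ((padicPi p ι).map φ) (padicPi p ι), ?_,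
    Measure.isAddLeftInvariant_eq_smul _ _⟩
  have key := congrArg (fun μ => μ (Set.univ.pi fun _ => Metric.closedBall 0 1))
    (Measure.isAddLeftInvariant_eq_smul ((padicPi p ι).map φ) (padicPi p ι))
  have hpre : φ ⁻¹' (Set.univ.pi fun _ => Metric.closedBall 0 1) =
      Set.univ.pi fun _ => Metric.closedBall (0 : ℚ_[p]) p := by
    ext x
    simp only [Set.mem_preimage, Set.mem_pi, Set.mem_univ, true_imp_iff,
      mem_closedBall_zero_iff, hφ, mulPrimeHomeomorph_apply, norm_mul, Padic.norm_p]
    refine forall_congr' fun i => ?_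
    rw [inv_mul_le_iff₀ hpR, mul_one]
  have hbox : padicPi p ι (Set.univ.pi fun _ => Metric.closedBall 0 1) = 1 := by
    simp [padicPi, Measure.pi_pi, padicHaar_closedBall_one]
  have hbox' : padicPi p ι (Set.univ.pi fun _ => Metric.closedBall (0 : ℚ_[p]) p) ≤
      (p : ENNReal) ^ Fintype.card ι := by
    simp only [padicPi, Measure.pi_pi, Finset.prod_const, Finset.card_univ]
    gcongr
    exact padicHaar_closedBall_prime_le p
  simp only [φ.measurableEmbedding.map_apply, hpre, Measure.smul_apply, hbox] at key
  rw [key] at hbox'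
  simpa [ENNReal.smul_def, ← ENNReal.coe_le_coe] using hbox'

lemma continuous_padicCoord {p : ℕ} [Fact p.Prime] {A : Finset ℕ} (n : ℕ) :
    Continuous fun x : A → ℚ_[p] => padicCoord x n := by
  unfold padicCoord
  split_ifs
  · exact continuous_apply _
  · exact continuous_const

lemma padicCoord_mulPrime {p : ℕ} [Fact p.Prime] {A : Finset ℕ} (x : A → ℚ_[p]) (n : ℕ) :
    padicCoord (mulPrimeHomeomorph p A x) n = p * padicCoord x n := by
  unfold padicCoord
  split_ifs
  · rfl
  · simp

lemma isOpen_Z1set (p : ℕ) [Fact p.Prime] (I : Finset ℕ) : IsOpen (Z1set p I) := by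
  have h : Z1set p I = (⋂ i : I, {x | ‖x i‖ ≤ 1} ∩ {x | x i ≠ 0}) ∩
      ⋂ q ∈ pairsIn I, {x | padicCoord x q.1 ≠ padicCoord x q.2} := by
    ext x; simp [Z1set]
  rw [h]
  refine (isOpen_iInter_of_finite fun i => IsOpen.inter ?_ ?_).inter
    (isOpen_biInter_finset fun q _ => ?_)
  · have hb : {x : I → ℚ_[p] | ‖x i‖ ≤ 1} =
        (fun x => x i) ⁻¹' Metric.closedBall (0 : ℚ_[p]) 1 := by ext x; simp
    rw [hb]
    exact (IsUltrametricDist.isOpen_closedBall _ one_ne_zero).preimage (continuous_apply i)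
  · exact isOpen_ne_fun (continuous_apply i) continuous_const
  · exact isOpen_ne_fun (continuous_padicCoord _) (continuous_padicCoord _)

lemma Z1set_nonempty (p : ℕ) [Fact p.Prime] (I : Finset ℕ) : (Z1set p I).Nonempty := by
  have hp : p.Prime := Fact.out
  refine ⟨fun i => (p : ℚ_[p]) ^ (i : ℕ), fun i => ⟨?_, ?_⟩, fun q hq => ?_⟩
  · rw [norm_pow]
    exact pow_le_one₀ (norm_nonneg _) Padic.norm_p_lt_one.le
  · exact pow_ne_zero _ (by exact_mod_cast hp.ne_zero)
  · simp only [pairsIn, Finset.mem_filter, Finset.mem_product] at hq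
    simp only [padicCoord, hq.1.1, hq.1.2, dif_pos]
    intro h
    have h' : p ^ q.1 = p ^ q.2 := by exact_mod_cast h
    exact hq.2.ne (Nat.pow_right_injective hp.two_le h')

lemma mulPrime_mem_Z1set {p : ℕ} [Fact p.Prime] {I : Finset ℕ} {x : I → ℚ_[p]}
    (hx : x ∈ Z1set p I) : mulPrimeHomeomorph p I x ∈ Z1set p I := by
  have hp0 : (p : ℚ_[p]) ≠ 0 := by exact_mod_cast (Fact.out : p.Prime).ne_zero
  refine ⟨fun i => ⟨?_, ?_⟩, fun q hq => ?_⟩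
  · rw [mulPrimeHomeomorph_apply, norm_mul]
    exact mul_le_one₀ Padic.norm_p_lt_one.le (norm_nonneg _) (hx.1 i).1
  · exact mul_ne_zero hp0 (hx.1 i).2
  · rw [padicCoord_mulPrime, padicCoord_mulPrime]
    exact fun h => hx.2 q hq (mul_left_cancel₀ hp0 h)

lemma sum_pairsIn (I : Finset ℕ) (f : ℕ → ℕ → ℝ) :
    ∑ q ∈ pairsIn I, f q.1 q.2 = ∑ i ∈ I, ∑ j ∈ I with i < j, f i j := by
  simp only [pairsIn, Finset.sum_filter, Finset.sum_product]

lemma two_card_add_sum_pairsIn_le (N : ℕ) (s : ℕ → ℕ → ℝ)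
    (hpos : ∀ i ∈ Finset.Icc 1 (N - 1), ∀ j ∈ Finset.Icc 1 (N - 1), 0 ≤ s i j)
    (I : Finset ℕ) (hI : I ⊆ Tset N) :
    2 * (I.card : ℝ) + ∑ q ∈ pairsIn I, s q.1 q.2 ≤
      ∑ i ∈ I, (2 + s 1 i + s (N - 1) i + ∑ j ∈ (Tset N).erase i, s i j) := by
  have hT : ∀ i ∈ Tset N, i ∈ Finset.Icc 1 (N - 1) ∧ 1 ≤ N - 1 := by
    intro i hi
    simp only [Tset, Finset.mem_Icc] at hi ⊢
    omega
  have h2 : 2 * (I.card : ℝ) = ∑ _i ∈ I, (2 : ℝ) := by simp [mul_comm]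
  rw [sum_pairsIn, h2, ← Finset.sum_add_distrib]
  refine Finset.sum_le_sum fun i hi => ?_
  obtain ⟨hi', hN⟩ := hT i (hI hi)
  have h1 := hpos 1 (by simp [hN]) i hi'
  have h3 := hpos (N - 1) (by simp [hN]) i hi'
  have h4 : ∑ j ∈ I with i < j, s i j ≤ ∑ j ∈ (Tset N).erase i, s i j := by
    refine Finset.sum_le_sum_of_subset_of_nonneg (fun j hj => ?_) fun j hj _ => ?_
    · rw [Finset.mem_filter] at hj
      exact Finset.mem_erase.2 ⟨hj.2.ne', hI hj.1⟩
    · exact hpos i hi' j (hT j (Finset.mem_of_mem_erase hj)).1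
  linarith

/-- The integrand of a local zeta function with exponents `s` on differences and `-e` on
coordinates. -/
def zetaIntegrand {p : ℕ} [Fact p.Prime] {I : Finset ℕ} (s : ℕ → ℕ → ℝ) (e : ℕ → ℝ)
    (x : I → ℚ_[p]) : ℝ :=
  (∏ q ∈ pairsIn I, ‖padicCoord x q.1 - padicCoord x q.2‖ ^ s q.1 q.2) *
    ∏ i ∈ I, ‖padicCoord x i‖ ^ (-e i)

lemma measurable_zetaIntegrand {p : ℕ} [Fact p.Prime] {I : Finset ℕ} (s : ℕ → ℕ → ℝ)
    (e : ℕ → ℝ) : Measurable (zetaIntegrand (p := p) (I := I) s e) := by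
  unfold zetaIntegrand
  refine (Finset.measurable_prod _ fun q _ => ?_).mul (Finset.measurable_prod _ fun i _ => ?_)
  · exact (((continuous_padicCoord q.1).sub
      (continuous_padicCoord q.2)).norm.measurable).pow_const _
  · exact (continuous_padicCoord i).norm.measurable.pow_const _

lemma zetaIntegrand_nonneg {p : ℕ} [Fact p.Prime] {I : Finset ℕ} (s : ℕ → ℕ → ℝ) (e : ℕ → ℝ)
    (x : I → ℚ_[p]) : 0 ≤ zetaIntegrand s e x := by
  unfold zetaIntegrand; positivity

lemma zetaIntegrand_pos {p : ℕ} [Fact p.Prime] {I : Finset ℕ} (s : ℕ → ℕ → ℝ) (e : ℕ → ℝ)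
    {x : I → ℚ_[p]} (hx : x ∈ Z1set p I) : 0 < zetaIntegrand s e x := by
  refine mul_pos (Finset.prod_pos fun q hq => ?_) (Finset.prod_pos fun i hi => ?_)
  · exact Real.rpow_pos_of_pos (norm_pos_iff.2 (sub_ne_zero.2 (hx.2 q hq))) _
  · refine Real.rpow_pos_of_pos (norm_pos_iff.2 ?_) _
    simpa [padicCoord, hi] using (hx.1 ⟨i, hi⟩).2

lemma zetaIntegrand_mulPrime {p : ℕ} [Fact p.Prime] {I : Finset ℕ} (s : ℕ → ℕ → ℝ) (e : ℕ → ℝ)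
    (x : I → ℚ_[p]) :
    zetaIntegrand s e (mulPrimeHomeomorph p I x) =
      (p : ℝ) ^ (∑ i ∈ I, e i - ∑ q ∈ pairsIn I, s q.1 q.2) * zetaIntegrand s e x := by
  have hpR : (0 : ℝ) < p := by exact_mod_cast (Fact.out : p.Prime).pos
  have hrp (t r : ℝ) (ht : 0 ≤ t) : ((p : ℝ)⁻¹ * t) ^ r = (p : ℝ) ^ (-r) * t ^ r := by
    rw [Real.mul_rpow (by positivity) ht, Real.inv_rpow hpR.le, Real.rpow_neg hpR.le]
  simp only [zetaIntegrand, padicCoord_mulPrime, ← mul_sub, norm_mul, Padic.norm_p,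
    hrp _ _ (norm_nonneg _), Finset.prod_mul_distrib, neg_neg]
  rw [← Real.rpow_sum_of_pos hpR, ← Real.rpow_sum_of_pos hpR, sub_eq_add_neg,
    Real.rpow_add hpR, Finset.sum_neg_distrib]
  ring

lemma lintegral_zetaIntegrand_eq_top {p : ℕ} [Fact p.Prime] {I : Finset ℕ} (hI : I.Nonempty)
    (s : ℕ → ℕ → ℝ) (e : ℕ → ℝ)
    (he : 2 * (I.card : ℝ) + ∑ q ∈ pairsIn I, s q.1 q.2 ≤ ∑ i ∈ I, e i) :
    ∫⁻ x in Z1set p I, ENNReal.ofReal (zetaIntegrand s e x) ∂(padicPi p I) = ⊤ := by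
  have hp : p.Prime := Fact.out
  have hpR : (1 : ℝ) ≤ p := by exact_mod_cast hp.one_le
  have hZ : MeasurableSet (Z1set p I) := (isOpen_Z1set p I).measurableSet
  set F : (I → ℚ_[p]) → ENNReal := fun x => ENNReal.ofReal (zetaIntegrand s e x) with hF
  set φ := (mulPrimeHomeomorph p I).toMeasurableEquiv with hφ
  set J := ∫⁻ x in Z1set p I, F x ∂(padicPi p I) with hJ
  have hJ0 : J ≠ 0 := by
    refine ((setLIntegral_pos_iff (measurable_zetaIntegrand s e).ennreal_ofReal).2 ?_).ne'
    refine ((isOpen_Z1set p I).measure_pos _ (Z1set_nonempty p I)).trans_le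
      (measure_mono fun x hx => ⟨?_, hx⟩)
    exact (ENNReal.ofReal_pos.2 (zetaIntegrand_pos s e hx)).ne'
  obtain ⟨c, hc, hmap⟩ := exists_map_mulPrime_eq_smul p I
  rw [Fintype.card_coe] at hc
  have hpoint (x : I → ℚ_[p]) : (p : ENNReal) ^ (2 * I.card) * F x ≤ F (φ x) := by
    have hle : (p : ℝ) ^ (2 * I.card) ≤
        (p : ℝ) ^ (∑ i ∈ I, e i - ∑ q ∈ pairsIn I, s q.1 q.2) := by
      rw [← Real.rpow_natCast]
      refine Real.rpow_le_rpow_of_exponent_le hpR ?_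
      push_cast
      linarith
    have hpow : (p : ENNReal) ^ (2 * I.card) = ENNReal.ofReal ((p : ℝ) ^ (2 * I.card)) := by
      rw [ENNReal.ofReal_pow (by positivity), ENNReal.ofReal_natCast]
    simp only [hF]
    rw [hpow, ← ENNReal.ofReal_mul (by positivity)]
    refine ENNReal.ofReal_le_ofReal ?_
    rw [hφ, Homeomorph.toMeasurableEquiv_coe, zetaIntegrand_mulPrime]
    exact mul_le_mul_of_nonneg_right hle (zetaIntegrand_nonneg s e x)
  have hscale : (p : ENNReal) ^ (2 * I.card) * J ≤ (p : ENNReal) ^ I.card * J := by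
    calc (p : ENNReal) ^ (2 * I.card) * J
        = ∫⁻ x in Z1set p I, (p : ENNReal) ^ (2 * I.card) * F x ∂(padicPi p I) := by
          rw [lintegral_const_mul _ (measurable_zetaIntegrand s e).ennreal_ofReal]
      _ ≤ ∫⁻ x in Z1set p I, F (φ x) ∂(padicPi p I) := lintegral_mono hpoint
      _ ≤ ∫⁻ x in φ ⁻¹' Z1set p I, F (φ x) ∂(padicPi p I) :=
          lintegral_mono_set fun x hx => mulPrime_mem_Z1set hx
      _ = ∫⁻ x in Z1set p I, F x ∂((padicPi p I).map φ) := by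
          rw [φ.restrict_map, lintegral_map_equiv]
      _ = c * J := by
          rw [hφ, Homeomorph.toMeasurableEquiv_coe, hmap, Measure.restrict_smul,
            lintegral_smul_measure]
          rfl
      _ ≤ (p : ENNReal) ^ I.card * J := by
          gcongr
          exact_mod_cast ENNReal.coe_le_coe.2 hc
  by_contra hJtop
  rw [ENNReal.mul_le_mul_iff_left hJ0 hJtop] at hscale
  have hnat : p ^ (2 * I.card) ≤ p ^ I.card := by exact_mod_cast hscale
  have := (Nat.pow_le_pow_iff_right hp.one_lt).1 hnat
  have := hI.card_pos
  omega

/-- If `s_{ij} ≥ 0` for all pairs `{i,j}` with `i, j ∈ {1, …, N-1}`, then `Z₁(s; I)`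
diverges to `+∞` for every nonempty `I ⊆ T`. -/
theorem Z1_diverges_of_nonneg (p : ℕ) [Fact p.Prime] (N : ℕ) (hN : 4 ≤ N)
    (s : ℕ → ℕ → ℝ) (hsym : ∀ i j, s i j = s j i)
    (hpos : ∀ i ∈ Finset.Icc 1 (N - 1), ∀ j ∈ Finset.Icc 1 (N - 1), 0 ≤ s i j) :
    ∀ I : Finset ℕ, I ⊆ Tset N → I.Nonempty →
      ∫⁻ x in Z1set p I,
        ENNReal.ofReal
          ((∏ q ∈ pairsIn I, ‖padicCoord x q.1 - padicCoord x q.2‖ ^ s q.1 q.2) *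
            ∏ i ∈ I, ‖padicCoord x i‖ ^
              (-(2 + s 1 i + s (N - 1) i + ∑ j ∈ (Tset N).erase i, s i j)))
        ∂(padicPi p ↥I) = ⊤ := by
  intro I hI hne
  exact lintegral_zetaIntegrand_eq_top hne s
    (fun i => 2 + s 1 i + s (N - 1) i + ∑ j ∈ (Tset N).erase i, s i j)
    (two_card_add_sum_pairsIn_le N s hpos I hI)
end
end
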